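/- arXiv:1801.01735 — 9 statements merged into one kernel-verified Lean document; each statement's English description precedes it below -/
import Mathlib

section
/- Let Γ be a group and ω a normalized 𝕋-valued 3-cocycle on Γ. Define Ψ : Γ × Γ → Map(Γ, 𝕋) by Ψ[s,t](γ) = ω(γ,s,t) · ω(s, s⁻¹γs, t)⁻¹ · ω(s, t, t⁻¹s⁻¹γst). Then Ψ is a normalized equivariant 2-cocycle for the adjoint action of Γ on itself: for all s, t, u, γ ∈ Γ one has Ψ[t,u](s⁻¹γs) · Ψ[st,u](γ)⁻¹ · Ψ[s,tu](γ) · Ψ[s,t](γ)⁻¹ = 1, and Ψ[s,t](γ) = 1 whenever s = e or t = e. -/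
/-- The equivariant 2-cochain on `Γ` (adjoint action) associated to a 3-cocycle `ω`:
`Ψ[s,t](γ) = ω(γ,s,t) · ω(s, s⁻¹γs, t)⁻¹ · ω(s, t, t⁻¹s⁻¹γst)`. -/
noncomputable def adPsi {Γ : Type*} [Group Γ] (ω : Γ → Γ → Γ → Circle) (s t γ : Γ) : Circle :=
  ω γ s t * (ω s (s⁻¹ * γ * s) t)⁻¹ * ω s t (t⁻¹ * s⁻¹ * γ * s * t)

/-!
Consider the action groupoid of the adjoint action of `Γ`, with arrows `s : γ → s⁻¹ * γ * s`. The
elements `γ` are the components of a natural transformation from the projection to `Γ` to itself,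
naturality being `γ * s = s * (s⁻¹ * γ * s)`. The chain homotopy of a natural transformation cuts
each prism over a simplex into simplices; applied to a 3-cocycle `ω` it gives `Ψ`, whose coboundary
is the quotient of the values of `ω` on the two ends of the prism. Both ends are the same simplex
here, so the coboundary is `1`.
-/

/-- The cocycle identity for an inhomogeneous 3-cochain on `G` with values in a multiplicatively
written `A`, on which `G` is understood to act trivially. -/
def IsMulCocycle₃ {G A : Type*} [Mul G] [Mul A] (ω : G → G → G → A) : Prop :=
  ∀ g₁ g₂ g₃ g₄ : G,
    ω g₁ g₂ g₃ * ω g₁ (g₂ * g₃) g₄ * ω g₂ g₃ g₄ = ω (g₁ * g₂) g₃ g₄ * ω g₁ g₂ (g₃ * g₄)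

/-- The prism operator of a 3-cochain `ω`: the alternating product of `ω` over the three
tetrahedra filling the prism with edges `s, t` on one end, `s', t'` on the other, and rungs
`x₀, x₁, x₂` between them. It is meant for commuting squares `x₀ * s' = s * x₁` and
`x₁ * t' = t * x₂`. -/
def prismProd {G A : Type*} [Mul A] [Inv A] (ω : G → G → G → A)
    (s t s' t' x₀ x₁ x₂ : G) : A :=
  ω x₀ s' t' * (ω s x₁ t')⁻¹ * ω s t x₂

theorem IsMulCocycle₃.prismProd_coboundary {G A : Type*} [Mul G] [CommGroup A]
    {ω : G → G → G → A} (hω : IsMulCocycle₃ ω)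
    {s t u s' t' u' x₀ x₁ x₂ x₃ : G}
    (hs : x₀ * s' = s * x₁) (ht : x₁ * t' = t * x₂) (hu : x₂ * u' = u * x₃) :
    prismProd ω t u t' u' x₁ x₂ x₃ * (prismProd ω (s * t) u (s' * t') u' x₀ x₂ x₃)⁻¹ *
        prismProd ω s (t * u) s' (t' * u') x₀ x₁ x₃ * (prismProd ω s t s' t' x₀ x₁ x₂)⁻¹ =
      ω s' t' u' * (ω s t u)⁻¹ := by
  -- the cocycle relations on the four 4-simplices that fill the prism over the tetrahedron
  have h₀ := congrArg Additive.ofMul (hω x₀ s' t' u')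
  have h₁ := congrArg Additive.ofMul (hω s x₁ t' u')
  have h₂ := congrArg Additive.ofMul (hω s t x₂ u')
  have h₃ := congrArg Additive.ofMul (hω s t u x₃)
  rw [hs] at h₀
  rw [ht] at h₁
  rw [hu] at h₂
  apply Additive.ofMul.injective
  simp only [prismProd, ofMul_mul, ofMul_inv] at h₀ h₁ h₂ h₃ ⊢
  linear_combination (norm := module) h₁ - h₀ - h₂ + h₃

section Conjugation

variable {G A : Type*} [Group G] [CommGroup A]

/-- The cochain `Ψ` for coefficients in an arbitrary commutative group: the prism operator applied
to the conjugation squares starting at `γ`. For `A = Circle` it agrees with `adPsi` definitionally.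
-/
def conjTransgression (ω : G → G → G → A) (s t γ : G) : A :=
  prismProd ω s t s t γ (s⁻¹ * γ * s) (t⁻¹ * s⁻¹ * γ * s * t)

theorem IsMulCocycle₃.conjTransgression_cocycle {ω : G → G → G → A}
    (hω : IsMulCocycle₃ ω) (s t u γ : G) :
    conjTransgression ω t u (s⁻¹ * γ * s) * (conjTransgression ω (s * t) u γ)⁻¹ *
      conjTransgression ω s (t * u) γ * (conjTransgression ω s t γ)⁻¹ = 1 := by
  have hprism := hω.prismProd_coboundary
    (show γ * s = s * (s⁻¹ * γ * s) by group)
    (show s⁻¹ * γ * s * t = t * (t⁻¹ * s⁻¹ * γ * s * t) by group)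
    (show t⁻¹ * s⁻¹ * γ * s * t * u = u * (u⁻¹ * t⁻¹ * s⁻¹ * γ * s * t * u) by group)
  simpa only [conjTransgression, mul_inv_rev, mul_assoc, mul_inv_cancel] using hprism

theorem conjTransgression_eq_one {ω : G → G → G → A}
    (hnorm : ∀ g₁ g₂ g₃ : G, g₁ = 1 ∨ g₂ = 1 ∨ g₃ = 1 → ω g₁ g₂ g₃ = 1)
    {s t : G} (hst : s = 1 ∨ t = 1) (γ : G) : conjTransgression ω s t γ = 1 := by
  rcases hst with rfl | rfl <;> simp [conjTransgression, prismProd, hnorm]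

theorem adPsi_is_normalized_equivariant_two_cocycle_general (ω : G → G → G → A)
    (hcoc : IsMulCocycle₃ ω)
    (hnorm : ∀ g₁ g₂ g₃ : G, g₁ = 1 ∨ g₂ = 1 ∨ g₃ = 1 → ω g₁ g₂ g₃ = 1) :
    (∀ s t u γ : G,
      conjTransgression ω t u (s⁻¹ * γ * s) * (conjTransgression ω (s * t) u γ)⁻¹ *
        conjTransgression ω s (t * u) γ * (conjTransgression ω s t γ)⁻¹ = 1) ∧
    (∀ s t γ : G, s = 1 ∨ t = 1 → conjTransgression ω s t γ = 1) :=
  ⟨hcoc.conjTransgression_cocycle, fun _ _ γ hst => conjTransgression_eq_one hnorm hst γ⟩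

end Conjugation

/-- If `ω` is a normalized 𝕋-valued 3-cocycle on `Γ`, then `Ψ` is a normalized equivariant
2-cocycle for the adjoint action of `Γ` on itself. -/
theorem adPsi_is_normalized_equivariant_two_cocycle
    {Γ : Type*} [Group Γ] (ω : Γ → Γ → Γ → Circle)
    (hcoc : ∀ γ₁ γ₂ γ₃ γ₄ : Γ,
      ω γ₁ γ₂ γ₃ * ω γ₁ (γ₂ * γ₃) γ₄ * ω γ₂ γ₃ γ₄ =
        ω (γ₁ * γ₂) γ₃ γ₄ * ω γ₁ γ₂ (γ₃ * γ₄))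
    (hnorm : ∀ γ₁ γ₂ γ₃ : Γ, γ₁ = 1 ∨ γ₂ = 1 ∨ γ₃ = 1 → ω γ₁ γ₂ γ₃ = 1) :
    (∀ s t u γ : Γ,
      adPsi ω t u (s⁻¹ * γ * s) * (adPsi ω (s * t) u γ)⁻¹ * adPsi ω s (t * u) γ *
        (adPsi ω s t γ)⁻¹ = 1) ∧
    (∀ s t γ : Γ, s = 1 ∨ t = 1 → adPsi ω s t γ = 1) :=
  adPsi_is_normalized_equivariant_two_cocycle_general ω hcoc hnorm
end

section
/- Let Γ be a group, ω a normalized 𝕋-valued 3-cocycle on Γ, and a ∈ Γ. Define φ_a(s,t) = ω(a,s,t) · ω(s,a,t)⁻¹ · ω(s,t,a) for s, t in the centralizer C_Γ(a) = {γ ∈ Γ : aγ = γa}. Then φ_a is a normalized 𝕋-valued 2-cocycle on the group C_Γ(a): for all s, t, u ∈ C_Γ(a) one has φ_a(t,u) · φ_a(st,u)⁻¹ · φ_a(s,tu) · φ_a(s,t)⁻¹ = 1, and φ_a(s,t) = 1 whenever s = e or t = e. -/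
/-- The 2-cochain on the centralizer of `a` associated to a 3-cocycle `ω`:
`φ_a(s,t) = ω(a,s,t) · ω(s,a,t)⁻¹ · ω(s,t,a)`. -/
noncomputable def phiA {Γ : Type*} [Group Γ] (ω : Γ → Γ → Γ → Circle) (a s t : Γ) : Circle :=
  ω a s t * (ω s a t)⁻¹ * ω s t a

/-!
The cochain `φ_a` is the slant product of `ω` with `a`, the alternating product over the ways of
inserting `a` among the arguments. On arguments commuting with `a`, the slant product
anticommutes with the coboundary: `δ (φ_a)` is the inverse of the slant product of `δ ω` with `a`.
Hence `δ ω = 1` forces `δ (φ_a) = 1`.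
-/

section Cochains

variable {G A : Type*} [CommGroup A]

/-- The coboundary of a 2-cochain on `G` with coefficients in the trivial module `A`, written
multiplicatively. -/
def coboundaryTwo [Mul G] (f : G → G → A) (s t u : G) : A :=
  f t u * (f (s * t) u)⁻¹ * f s (t * u) * (f s t)⁻¹

/-- The coboundary of a 3-cochain on `G` with coefficients in the trivial module `A`, written
multiplicatively. -/
def coboundaryThree [Mul G] (ω : G → G → G → A) (s t u v : G) : A :=
  ω t u v * (ω (s * t) u v)⁻¹ * ω s (t * u) v * (ω s t (u * v))⁻¹ * ω s t u

/-- The slant product of a 3-cochain with `a`; for `A = Circle` this is `phiA`. -/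
def slantProductThree (ω : G → G → G → A) (a s t : G) : A :=
  ω a s t * (ω s a t)⁻¹ * ω s t a

/-- The slant product of a 4-cochain with `a`. -/
def slantProductFour (c : G → G → G → G → A) (a s t u : G) : A :=
  c a s t u * (c s a t u)⁻¹ * c s t a u * (c s t u a)⁻¹

theorem coboundaryThree_eq_one_iff [Mul G] {ω : G → G → G → A} {s t u v : G} :
    coboundaryThree ω s t u v = 1 ↔
      ω s t u * ω s (t * u) v * ω t u v = ω (s * t) u v * ω s t (u * v) := by
  have cleared : coboundaryThree ω s t u v =
      ω s t u * ω s (t * u) v * ω t u v / (ω (s * t) u v * ω s t (u * v)) := by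
    apply Additive.ofMul.injective
    simp only [coboundaryThree, ofMul_mul, ofMul_inv, ofMul_div]
    abel
  rw [cleared, div_eq_one]

/-- Inserting `a` just before or just after `s` produces the same merged argument `a * s = s * a`,
with opposite signs, so the terms of the right-hand side containing it cancel in pairs. -/
theorem coboundaryTwo_slantProductThree [Mul G] (ω : G → G → G → A) {a s t u : G}
    (hs : Commute a s) (ht : Commute a t) (hu : Commute a u) :
    coboundaryTwo (slantProductThree ω a) s t u =
      (slantProductFour (coboundaryThree ω) a s t u)⁻¹ := by
  simp only [coboundaryTwo, slantProductThree, slantProductFour, coboundaryThree,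
    hs.eq, ht.eq, hu.eq]
  apply Additive.ofMul.injective
  simp only [ofMul_mul, ofMul_inv]
  abel

theorem coboundaryTwo_slantProductThree_eq_one [Mul G] {ω : G → G → G → A}
    (hω : ∀ s t u v, coboundaryThree ω s t u v = 1) {a s t u : G}
    (hs : Commute a s) (ht : Commute a t) (hu : Commute a u) :
    coboundaryTwo (slantProductThree ω a) s t u = 1 := by
  simp [coboundaryTwo_slantProductThree ω hs ht hu, slantProductFour, hω]

theorem slantProductThree_eq_one_of_eq_one [One G] {ω : G → G → G → A}
    (hω : ∀ s t u, s = 1 ∨ t = 1 ∨ u = 1 → ω s t u = 1) (a : G) {s t : G}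
    (hst : s = 1 ∨ t = 1) : slantProductThree ω a s t = 1 := by
  rcases hst with hs | ht
  · simp [slantProductThree, hω, hs]
  · simp [slantProductThree, hω, ht]

theorem phiA_is_normalized_two_cocycle_on_centralizer_general [MulOneClass G]
    (ω : G → G → G → A)
    (hcoc : ∀ s t u v : G,
      ω s t u * ω s (t * u) v * ω t u v = ω (s * t) u v * ω s t (u * v))
    (hnorm : ∀ s t u : G, s = 1 ∨ t = 1 ∨ u = 1 → ω s t u = 1) (a : G) :
    (∀ s t u : G, Commute a s → Commute a t → Commute a u →
      coboundaryTwo (slantProductThree ω a) s t u = 1) ∧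
    (∀ s t : G, s = 1 ∨ t = 1 → slantProductThree ω a s t = 1) :=
  ⟨fun _ _ _ => coboundaryTwo_slantProductThree_eq_one
      fun s t u v => coboundaryThree_eq_one_iff.mpr (hcoc s t u v),
    fun _ _ => slantProductThree_eq_one_of_eq_one hnorm a⟩

end Cochains

/-- If `ω` is a normalized 𝕋-valued 3-cocycle on `Γ` and `a ∈ Γ`, then `φ_a` is a normalized
𝕋-valued 2-cocycle on the centralizer `C_Γ(a)`. -/
theorem phiA_is_normalized_two_cocycle_on_centralizer
    {Γ : Type*} [Group Γ] (ω : Γ → Γ → Γ → Circle)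
    (hcoc : ∀ γ₁ γ₂ γ₃ γ₄ : Γ,
      ω γ₁ γ₂ γ₃ * ω γ₁ (γ₂ * γ₃) γ₄ * ω γ₂ γ₃ γ₄ =
        ω (γ₁ * γ₂) γ₃ γ₄ * ω γ₁ γ₂ (γ₃ * γ₄))
    (hnorm : ∀ γ₁ γ₂ γ₃ : Γ, γ₁ = 1 ∨ γ₂ = 1 ∨ γ₃ = 1 → ω γ₁ γ₂ γ₃ = 1)
    (a : Γ) :
    (∀ s t u : Γ, a * s = s * a → a * t = t * a → a * u = u * a →
      phiA ω a t u * (phiA ω a (s * t) u)⁻¹ * phiA ω a s (t * u) * (phiA ω a s t)⁻¹ = 1) ∧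
    (∀ s t : Γ, a * s = s * a → a * t = t * a → s = 1 ∨ t = 1 → phiA ω a s t = 1) :=
  have ⟨cocycle, normalized⟩ :=
    phiA_is_normalized_two_cocycle_on_centralizer_general ω hcoc hnorm a
  ⟨cocycle, fun s t _ _ => normalized s t⟩
end

section
/- Let G be a groupoid and ψ a 𝕋-valued 2-cocycle on G satisfying ψ(g, id_{dom(g)}) = 1 = ψ(id_{codom(g)}, g) for every morphism g. Then there exists a function ξ from the morphisms of G to 𝕋 with ξ(g)² = ψ(g, g⁻¹), ξ(g) = ξ(g⁻¹), and ξ(id_x) = 1 for all objects x; and for any such ξ, the function ψ'(g₁,g₂) = ψ(g₁,g₂) · ξ(g₁g₂) · ξ(g₁)⁻¹ · ξ(g₂)⁻¹ is again a 𝕋-valued 2-cocycle on G and satisfies ψ'(g, g⁻¹) = 1, ψ'(g, id_{dom(g)}) = 1, and ψ'(id_{codom(g)}, g) = 1 for every morphism g. -/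
open CategoryTheory

/-- The twist of a groupoid 2-cochain `ψ` by a 1-cochain `ξ`:
`ψ'(g₁,g₂) = ψ(g₁,g₂) · ξ(g₁g₂) · ξ(g₁)⁻¹ · ξ(g₂)⁻¹` (with `g₁g₂ = g₂ ≫ g₁`). -/
noncomputable def twistedPsi {G : Type*} [Groupoid G]
    (ψ : ∀ x y z : G, (y ⟶ z) → (x ⟶ y) → Circle)
    (ξ : ∀ x y : G, (x ⟶ y) → Circle)
    (x y z : G) (g₁ : y ⟶ z) (g₂ : x ⟶ y) : Circle :=
  ψ x y z g₁ g₂ * ξ x z (g₂ ≫ g₁) * (ξ y z g₁)⁻¹ * (ξ x y g₂)⁻¹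

/-!
The twist of `ψ` by `ξ` is `ψ / dξ`, so it is a cocycle because `dξ` is one. The cocycle identity at
`(g, g⁻¹, g)` shows that a normalized cocycle satisfies `ψ(g, g⁻¹) = ψ(g⁻¹, g)`. Hence composing
`g ↦ ψ(g, g⁻¹)` with any choice of square roots sending `1` to `1` gives an admissible `ξ`, and
`dξ(g, g⁻¹) = ξ(g⁻¹) ξ(g) = ξ(g)² = ψ(g, g⁻¹)` makes the twist trivial on `(g, g⁻¹)`.
-/

section Category

variable {C A : Type*} [Category C]

/-- The `A`-valued 1-cochains on a category: functions on its morphisms. -/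
abbrev OneCochain (C A : Type*) [Category C] :=
  ∀ x y : C, (x ⟶ y) → A

/-- The `A`-valued 2-cochains on a category: functions on its composable pairs `(g₁, g₂)`, where
`g₂` is applied first, so that the product `g₁g₂` is `g₂ ≫ g₁`. -/
abbrev TwoCochain (C A : Type*) [Category C] :=
  ∀ x y z : C, (y ⟶ z) → (x ⟶ y) → A

/-- A 2-cochain is normalized if it is trivial on pairs in which one morphism is an identity. -/
structure TwoCochain.IsNormalized [One A] (ψ : TwoCochain C A) : Prop where
  right_id : ∀ (x y : C) (g : x ⟶ y), ψ x x y g (𝟙 x) = 1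
  left_id : ∀ (x y : C) (g : x ⟶ y), ψ x y y (𝟙 y) g = 1

variable [CommGroup A]

/-- The 2-cocycle identity for the trivial action on the coefficients. -/
def TwoCochain.IsCocycle (ψ : TwoCochain C A) : Prop :=
  ∀ (w x y z : C) (g₁ : y ⟶ z) (g₂ : x ⟶ y) (g₃ : w ⟶ x),
    ψ w x y g₂ g₃ * (ψ w x z (g₂ ≫ g₁) g₃)⁻¹ * ψ w y z g₁ (g₃ ≫ g₂) * (ψ x y z g₁ g₂)⁻¹ = 1

/-- The coboundary `dξ(g₁, g₂) = ξ(g₂) ξ(g₁g₂)⁻¹ ξ(g₁)` of a 1-cochain. -/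
def OneCochain.coboundary (ξ : OneCochain C A) : TwoCochain C A :=
  fun x y z g₁ g₂ => ξ x y g₂ * (ξ x z (g₂ ≫ g₁))⁻¹ * ξ y z g₁

theorem OneCochain.isCocycle_coboundary (ξ : OneCochain C A) : ξ.coboundary.IsCocycle := by
  intro w x y z g₁ g₂ g₃
  apply Additive.ofMul.injective
  simp only [coboundary, Category.assoc, ofMul_mul, ofMul_inv, ofMul_one]
  abel

theorem OneCochain.isNormalized_coboundary {ξ : OneCochain C A} (hξ : ∀ x, ξ x x (𝟙 x) = 1) :
    ξ.coboundary.IsNormalized where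
  right_id x y g := by simp [coboundary, hξ]
  left_id x y g := by simp [coboundary, hξ]

theorem TwoCochain.IsCocycle.div {ψ φ : TwoCochain C A} (hψ : ψ.IsCocycle) (hφ : φ.IsCocycle) :
    (ψ / φ).IsCocycle := by
  intro w x y z g₁ g₂ g₃
  simpa only [Pi.div_apply, inv_div, inv_div_inv, mul_div_mul_comm, div_one] using
    congrArg₂ (· / ·) (hψ w x y z g₁ g₂ g₃) (hφ w x y z g₁ g₂ g₃)

theorem TwoCochain.IsNormalized.div {ψ φ : TwoCochain C A} (hψ : ψ.IsNormalized)
    (hφ : φ.IsNormalized) : (ψ / φ).IsNormalized where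
  right_id x y g := by simp [hψ.right_id, hφ.right_id]
  left_id x y g := by simp [hψ.left_id, hφ.left_id]

end Category

theorem exists_sqrt_map_one (A : Type*) [Monoid A] :
    ∃ r : A → A, r 1 = 1 ∧ ∀ a, IsSquare a → r a ^ 2 = a := by
  classical
  have sqrt_or_one (a : A) : ∃ b, (a = 1 → b = 1) ∧ (IsSquare a → b ^ 2 = a) := by
    by_cases ha : a = 1
    · exact ⟨1, fun _ => rfl, fun _ => by rw [one_pow, ha]⟩
    · by_cases hsq : IsSquare a
      · obtain ⟨b, hb⟩ := hsq
        exact ⟨b, fun h => absurd h ha, fun _ => by rw [sq, hb]⟩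
      · exact ⟨1, fun _ => rfl, fun h => absurd h hsq⟩
  choose r r_one r_sq using sqrt_or_one
  exact ⟨r, r_one 1 rfl, r_sq⟩

theorem isSquare_circle (z : Circle) : IsSquare z :=
  ⟨Circle.exp (Complex.arg z / 2), by rw [← Circle.exp_add, add_halves, Circle.exp_arg]⟩

section Groupoid

variable {G A : Type*} [Groupoid G] [CommGroup A] {ψ : TwoCochain G A} {ξ : OneCochain G A}

/-- A normalized 2-cochain on a groupoid is strongly normalized if it is moreover trivial on all
pairs `(g, g⁻¹)`. -/
structure TwoCochain.IsStronglyNormalized (ψ : TwoCochain G A) : Prop extends ψ.IsNormalized where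
  inv_right : ∀ (x y : G) (g : x ⟶ y), ψ y x y g (Groupoid.inv g) = 1

/-- The 1-cochains `ξ` by which `ψ` is twisted: inversion-invariant square roots of
`g ↦ ψ(g, g⁻¹)` that are trivial on identities. -/
structure OneCochain.IsSymmetricSqrt (ξ : OneCochain G A) (ψ : TwoCochain G A) : Prop where
  sq_eq : ∀ (x y : G) (g : x ⟶ y), ξ x y g ^ 2 = ψ y x y g (Groupoid.inv g)
  symm : ∀ (x y : G) (g : x ⟶ y), ξ x y g = ξ y x (Groupoid.inv g)
  map_id : ∀ x : G, ξ x x (𝟙 x) = 1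

theorem TwoCochain.IsCocycle.inv_symm (hψ : ψ.IsCocycle) (hnorm : ψ.IsNormalized) {x y : G}
    (g : x ⟶ y) : ψ x y x (Groupoid.inv g) g = ψ y x y g (Groupoid.inv g) := by
  have cocycle_identity := hψ x y x y g (Groupoid.inv g) g
  simpa only [Groupoid.inv_comp, Groupoid.comp_inv, hnorm.right_id, hnorm.left_id, inv_one,
    mul_one, mul_inv_eq_one] using cocycle_identity

theorem TwoCochain.IsCocycle.exists_isSymmetricSqrt (hψ : ψ.IsCocycle) (hnorm : ψ.IsNormalized)
    (hsq : ∀ (x y : G) (g : x ⟶ y), IsSquare (ψ y x y g (Groupoid.inv g))) :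
    ∃ ξ : OneCochain G A, ξ.IsSymmetricSqrt ψ := by
  obtain ⟨r, r_one, r_sq⟩ := exists_sqrt_map_one A
  refine ⟨fun x y g => r (ψ y x y g (Groupoid.inv g)), fun x y g => r_sq _ (hsq x y g),
    fun x y g => ?_, fun x => ?_⟩
  · have inv_inv : Groupoid.inv (Groupoid.inv g) = g := by
      simp only [Groupoid.inv_eq_inv, IsIso.inv_inv]
    rw [inv_inv, hψ.inv_symm hnorm]
  · simp only [hnorm.left_id, r_one]

theorem OneCochain.IsSymmetricSqrt.coboundary_inv_right (hξ : ξ.IsSymmetricSqrt ψ) {x y : G}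
    (g : x ⟶ y) : ξ.coboundary y x y g (Groupoid.inv g) = ψ y x y g (Groupoid.inv g) := by
  rw [coboundary, Groupoid.inv_comp, hξ.map_id, inv_one, mul_one, ← hξ.symm, ← sq, hξ.sq_eq]

theorem TwoCochain.IsNormalized.isStronglyNormalized_div_coboundary (hnorm : ψ.IsNormalized)
    (hξ : ξ.IsSymmetricSqrt ψ) : (ψ / ξ.coboundary).IsStronglyNormalized where
  toIsNormalized := hnorm.div (OneCochain.isNormalized_coboundary hξ.map_id)
  inv_right x y g := by simp only [Pi.div_apply, hξ.coboundary_inv_right, div_self']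

theorem groupoid_two_cocycle_strong_normalization_general (hψ : ψ.IsCocycle)
    (hnorm : ψ.IsNormalized)
    (hsq : ∀ (x y : G) (g : x ⟶ y), IsSquare (ψ y x y g (Groupoid.inv g))) :
    (∃ ξ : OneCochain G A, ξ.IsSymmetricSqrt ψ) ∧
      ∀ ξ : OneCochain G A, ξ.IsSymmetricSqrt ψ →
        (ψ / ξ.coboundary).IsCocycle ∧ (ψ / ξ.coboundary).IsStronglyNormalized :=
  ⟨hψ.exists_isSymmetricSqrt hnorm hsq, fun ξ hξ =>
    ⟨hψ.div ξ.isCocycle_coboundary, hnorm.isStronglyNormalized_div_coboundary hξ⟩⟩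

theorem twistedPsi_eq_div_coboundary (ψ : TwoCochain G Circle) (ξ : OneCochain G Circle) :
    twistedPsi ψ ξ = ψ / ξ.coboundary := by
  funext x y z g₁ g₂
  simp only [twistedPsi, OneCochain.coboundary, Pi.div_apply, div_eq_mul_inv, mul_inv_rev, inv_inv]
  ac_rfl

end Groupoid

/-- For a 𝕋-valued 2-cocycle `ψ` on a groupoid `G` with `ψ(g, id_{dom g}) = 1 =
ψ(id_{codom g}, g)`, there is `ξ` with `ξ(g)² = ψ(g,g⁻¹)`, `ξ(g) = ξ(g⁻¹)`, `ξ(id) = 1`;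
and for any such `ξ` the twisted cochain `ψ'` is again a 2-cocycle and satisfies
`ψ'(g,g⁻¹) = 1`, `ψ'(g, id_{dom g}) = 1`, `ψ'(id_{codom g}, g) = 1`. -/
theorem groupoid_two_cocycle_strong_normalization
    {G : Type*} [Groupoid G]
    (ψ : ∀ x y z : G, (y ⟶ z) → (x ⟶ y) → Circle)
    (hcoc : ∀ (w x y z : G) (g₁ : y ⟶ z) (g₂ : x ⟶ y) (g₃ : w ⟶ x),
      ψ w x y g₂ g₃ * (ψ w x z (g₂ ≫ g₁) g₃)⁻¹ * ψ w y z g₁ (g₃ ≫ g₂) *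
        (ψ x y z g₁ g₂)⁻¹ = 1)
    (hnorm₁ : ∀ (x y : G) (g : x ⟶ y), ψ x x y g (𝟙 x) = 1)
    (hnorm₂ : ∀ (x y : G) (g : x ⟶ y), ψ x y y (𝟙 y) g = 1) :
    (∃ ξ : ∀ x y : G, (x ⟶ y) → Circle,
      (∀ (x y : G) (g : x ⟶ y), ξ x y g ^ 2 = ψ y x y g (Groupoid.inv g)) ∧
      (∀ (x y : G) (g : x ⟶ y), ξ x y g = ξ y x (Groupoid.inv g)) ∧
      (∀ x : G, ξ x x (𝟙 x) = 1)) ∧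
    (∀ ξ : ∀ x y : G, (x ⟶ y) → Circle,
      (∀ (x y : G) (g : x ⟶ y), ξ x y g ^ 2 = ψ y x y g (Groupoid.inv g)) →
      (∀ (x y : G) (g : x ⟶ y), ξ x y g = ξ y x (Groupoid.inv g)) →
      (∀ x : G, ξ x x (𝟙 x) = 1) →
      ((∀ (w x y z : G) (g₁ : y ⟶ z) (g₂ : x ⟶ y) (g₃ : w ⟶ x),
          twistedPsi ψ ξ w x y g₂ g₃ * (twistedPsi ψ ξ w x z (g₂ ≫ g₁) g₃)⁻¹ *
            twistedPsi ψ ξ w y z g₁ (g₃ ≫ g₂) * (twistedPsi ψ ξ x y z g₁ g₂)⁻¹ = 1) ∧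
        (∀ (x y : G) (g : x ⟶ y), twistedPsi ψ ξ y x y g (Groupoid.inv g) = 1) ∧
        (∀ (x y : G) (g : x ⟶ y), twistedPsi ψ ξ x x y g (𝟙 x) = 1) ∧
        (∀ (x y : G) (g : x ⟶ y), twistedPsi ψ ξ x y y (𝟙 y) g = 1))) := by
  have ⟨hexists, htwist⟩ := groupoid_two_cocycle_strong_normalization_general (ψ := ψ) hcoc
    ⟨hnorm₁, hnorm₂⟩ fun _ _ _ => isSquare_circle _
  refine ⟨hexists.imp fun ξ hξ => ⟨hξ.sq_eq, hξ.symm, hξ.map_id⟩, fun ξ hsq hsymm hid => ?_⟩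
  have ⟨hcocycle, hstrong⟩ := htwist ξ ⟨hsq, hsymm, hid⟩
  rw [twistedPsi_eq_div_coboundary]
  exact ⟨hcocycle, hstrong.inv_right, hstrong.right_id, hstrong.left_id⟩
end

section
/- Let Γ be a group and ω a normalized 𝕋-valued 3-cocycle on Γ. Then for all s, γ ∈ Γ one has ω(sγ, s⁻¹, s) · ω(s⁻¹, sγ, s⁻¹) = ω(γ, s⁻¹, s) · ω(s⁻¹, sγs⁻¹, s)⁻¹. -/
theorem omega_identity_five_general {M A : Type*} [Monoid M] [CommGroup A] {ω : M → M → M → A}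
    (hcoc : ∀ a b c d : M,
      ω a b c * ω a (b * c) d * ω b c d = ω (a * b) c d * ω a b (c * d))
    (hnorm : ∀ a b : M, ω a b 1 = 1) {s t : M} (hts : t * s = 1) (x : M) :
    ω x t s * ω t x t = ω (t * x) t s * (ω t (x * t) s)⁻¹ := by
  rw [eq_mul_inv_iff_mul_eq]
  calc
    ω x t s * ω t x t * ω t (x * t) s
      = ω t x t * ω t (x * t) s * ω x t s := by rw [mul_assoc, mul_comm]
    _ = ω (t * x) t s * ω t x (t * s) := hcoc t x t s
    _ = ω (t * x) t s := by rw [hts, hnorm, mul_one]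

/-- For a normalized 𝕋-valued 3-cocycle `ω` on a group `Γ`, one has
`ω(sγ, s⁻¹, s) · ω(s⁻¹, sγ, s⁻¹) = ω(γ, s⁻¹, s) · ω(s⁻¹, sγs⁻¹, s)⁻¹` for all `s, γ`. -/
theorem omega_identity_five
    {Γ : Type*} [Group Γ] (ω : Γ → Γ → Γ → Circle)
    (hcoc : ∀ γ₁ γ₂ γ₃ γ₄ : Γ,
      ω γ₁ γ₂ γ₃ * ω γ₁ (γ₂ * γ₃) γ₄ * ω γ₂ γ₃ γ₄ =
        ω (γ₁ * γ₂) γ₃ γ₄ * ω γ₁ γ₂ (γ₃ * γ₄))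
    (hnorm : ∀ γ₁ γ₂ γ₃ : Γ, γ₁ = 1 ∨ γ₂ = 1 ∨ γ₃ = 1 → ω γ₁ γ₂ γ₃ = 1) :
    ∀ s γ : Γ,
      ω (s * γ) s⁻¹ s * ω s⁻¹ (s * γ) s⁻¹ =
        ω γ s⁻¹ s * (ω s⁻¹ (s * γ * s⁻¹) s)⁻¹ := by
  intro s γ
  simpa only [inv_mul_cancel_left] using omega_identity_five_general hcoc
    (fun a b ↦ hnorm a b 1 (.inr (.inr rfl))) (inv_mul_cancel s) (s * γ)
end

section
/- Let Γ be a group and ω a normalized 𝕋-valued 3-cocycle on Γ. Consider the action groupoid G = Γ ⋉_Ad Γ of the adjoint action: morphisms are pairs g = (s, γ) with dom(g) = γ and codom(g) = sγs⁻¹, and (s₁,γ₁) and (s₂,γ₂) are composable iff γ₁ = s₂γ₂s₂⁻¹, with composite (s₁s₂, γ₂). Define ψ((s₁,γ₁),(s₂,γ₂)) = ω(s₁γ₁s₁⁻¹, s₁, s₂) · ω(s₁, γ₁, s₂)⁻¹ · ω(s₁, s₂, γ₂) for composable pairs. Then ψ is a groupoid 2-cocycle on G: for all s₁, s₂, s₃,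 γ₃ ∈ Γ, setting γ₂ = s₃γ₃s₃⁻¹ and γ₁ = s₂γ₂s₂⁻¹, one has ψ((s₂,γ₂),(s₃,γ₃)) · ψ((s₁s₂,γ₂),(s₃,γ₃))⁻¹ · ψ((s₁,γ₁),(s₂s₃,γ₃)) · ψ((s₁,γ₁),(s₂,γ₂))⁻¹ = 1; moreover ψ(g₁,g₂) = 1 whenever s₁ = e or s₂ = e. -/
/-- The 2-cochain on the action groupoid `Γ ⋉_Ad Γ` associated to a 3-cocycle `ω`:
`ψ((s₁,γ₁),(s₂,γ₂)) = ω(s₁γ₁s₁⁻¹, s₁, s₂) · ω(s₁,γ₁,s₂)⁻¹ · ω(s₁,s₂,γ₂)`. -/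
noncomputable def actPsi {Γ : Type*} [Group Γ] (ω : Γ → Γ → Γ → Circle)
    (s₁ γ₁ s₂ γ₂ : Γ) : Circle :=
  ω (s₁ * γ₁ * s₁⁻¹) s₁ s₂ * (ω s₁ γ₁ s₂)⁻¹ * ω s₁ s₂ γ₂

/-!
A composable string `γ₃ → γ₂ → γ₁ → γ₀` of morphisms `s₃, s₂, s₁` of the action groupoid is a prism
whose vertical edges are the `γᵢ` and whose other edges are the `sᵢ`. Cutting the prism over a pair
of morphisms into three tetrahedra gives the alternating product `ψ`; cutting the prism over a
triple into four 4-simplices writes the coboundary of `ψ` as an alternating product of four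
coboundaries of `ω`: interior faces cancel because of the commuting squares `s₁ γ₁ = γ₀ s₁`,
`s₂ γ₂ = γ₁ s₂`, `s₃ γ₃ = γ₂ s₃`, and the two ends of the prism cancel because both contribute
`ω(s₁, s₂, s₃)`. Each of the four factors is `1` when `ω` is a cocycle.
-/

/-- The coboundary of a 3-cochain with trivial coefficient action, written as the quotient of the
two sides of the 3-cocycle equation. -/
def threeCoboundary {M A : Type*} [Mul M] [CommGroup A] (ω : M → M → M → A) (a b c d : M) : A :=
  ω a b c * ω a (b * c) d * ω b c d / (ω (a * b) c d * ω a b (c * d))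

/-- The transgression of a 3-cochain to loops, evaluated on the composable pair
`γ₂ → γ₁ → γ₀` of morphisms `t`, `s`. Passing the codomain `γ₀` explicitly, instead of as
`s * γ₁ * s⁻¹`, makes inverses unnecessary. -/
def loopTransgression {M A : Type*} [CommGroup A] (ω : M → M → M → A) (γ₀ s γ₁ t γ₂ : M) : A :=
  ω γ₀ s t * (ω s γ₁ t)⁻¹ * ω s t γ₂

theorem coboundary_loopTransgression {M A : Type*} [Mul M] [CommGroup A] (ω : M → M → M → A)
    {s₁ s₂ s₃ γ₀ γ₁ γ₂ γ₃ : M}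
    (h₁ : SemiconjBy s₁ γ₁ γ₀) (h₂ : SemiconjBy s₂ γ₂ γ₁) (h₃ : SemiconjBy s₃ γ₃ γ₂) :
    loopTransgression ω γ₁ s₂ γ₂ s₃ γ₃ * (loopTransgression ω γ₀ (s₁ * s₂) γ₂ s₃ γ₃)⁻¹ *
        loopTransgression ω γ₀ s₁ γ₁ (s₂ * s₃) γ₃ * (loopTransgression ω γ₀ s₁ γ₁ s₂ γ₂)⁻¹ =
      (threeCoboundary ω γ₀ s₁ s₂ s₃)⁻¹ * threeCoboundary ω s₁ γ₁ s₂ s₃ *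
        (threeCoboundary ω s₁ s₂ γ₂ s₃)⁻¹ * threeCoboundary ω s₁ s₂ s₃ γ₃ := by
  simp only [loopTransgression, threeCoboundary, h₁.eq, h₂.eq, h₃.eq]
  -- The rest is an identity in the free abelian group on the values of `ω`.
  apply Additive.ofMul.injective
  simp only [ofMul_mul, ofMul_inv, ofMul_div]
  abel

theorem actPsi_eq_loopTransgression {Γ : Type*} [Group Γ] (ω : Γ → Γ → Γ → Circle)
    {s γ₁ γ₀ : Γ} (h : SemiconjBy s γ₁ γ₀) (t γ₂ : Γ) :
    actPsi ω s γ₁ t γ₂ = loopTransgression ω γ₀ s γ₁ t γ₂ := by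
  rw [actPsi, loopTransgression, h.eq, mul_inv_cancel_right]

theorem actPsi_is_groupoid_two_cocycle_general
    {M A : Type*} [Monoid M] [CommGroup A] (ω : M → M → M → A)
    (hcoc : ∀ γ₁ γ₂ γ₃ γ₄ : M,
      ω γ₁ γ₂ γ₃ * ω γ₁ (γ₂ * γ₃) γ₄ * ω γ₂ γ₃ γ₄ =
        ω (γ₁ * γ₂) γ₃ γ₄ * ω γ₁ γ₂ (γ₃ * γ₄))
    (hnorm : ∀ γ₁ γ₂ γ₃ : M, γ₁ = 1 ∨ γ₂ = 1 ∨ γ₃ = 1 → ω γ₁ γ₂ γ₃ = 1) :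
    (∀ s₁ s₂ s₃ γ₃ γ₂ γ₁ γ₀ : M,
      SemiconjBy s₃ γ₃ γ₂ → SemiconjBy s₂ γ₂ γ₁ → SemiconjBy s₁ γ₁ γ₀ →
      loopTransgression ω γ₁ s₂ γ₂ s₃ γ₃ * (loopTransgression ω γ₀ (s₁ * s₂) γ₂ s₃ γ₃)⁻¹ *
        loopTransgression ω γ₀ s₁ γ₁ (s₂ * s₃) γ₃ *
        (loopTransgression ω γ₀ s₁ γ₁ s₂ γ₂)⁻¹ = 1) ∧
    (∀ γ₀ s₁ γ₁ s₂ γ₂ : M, s₁ = 1 ∨ s₂ = 1 → loopTransgression ω γ₀ s₁ γ₁ s₂ γ₂ = 1) := by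
  have hδ (a b c d : M) : threeCoboundary ω a b c d = 1 := div_eq_one.mpr (hcoc a b c d)
  refine ⟨fun s₁ s₂ s₃ γ₃ γ₂ γ₁ γ₀ h₃ h₂ h₁ ↦ ?_, ?_⟩
  · simp only [coboundary_loopTransgression ω h₁ h₂ h₃, hδ, inv_one, mul_one]
  · rintro γ₀ s₁ γ₁ s₂ γ₂ (rfl | rfl) <;> simp [loopTransgression, hnorm]

/-- If `ω` is a normalized 𝕋-valued 3-cocycle on `Γ`, then `ψ` is a 2-cocycle on the action
groupoid `Γ ⋉_Ad Γ` of the adjoint action (morphisms `(s,γ) : γ ⟶ sγs⁻¹`, composition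
`(s₁,γ₁)(s₂,γ₂) = (s₁s₂,γ₂)` when `γ₁ = s₂γ₂s₂⁻¹`), normalized in the sense that
`ψ(g₁,g₂) = 1` whenever `s₁ = e` or `s₂ = e`. -/
theorem actPsi_is_groupoid_two_cocycle
    {Γ : Type*} [Group Γ] (ω : Γ → Γ → Γ → Circle)
    (hcoc : ∀ γ₁ γ₂ γ₃ γ₄ : Γ,
      ω γ₁ γ₂ γ₃ * ω γ₁ (γ₂ * γ₃) γ₄ * ω γ₂ γ₃ γ₄ =
        ω (γ₁ * γ₂) γ₃ γ₄ * ω γ₁ γ₂ (γ₃ * γ₄))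
    (hnorm : ∀ γ₁ γ₂ γ₃ : Γ, γ₁ = 1 ∨ γ₂ = 1 ∨ γ₃ = 1 → ω γ₁ γ₂ γ₃ = 1) :
    (∀ s₁ s₂ s₃ γ₃ γ₂ γ₁ : Γ, γ₂ = s₃ * γ₃ * s₃⁻¹ → γ₁ = s₂ * γ₂ * s₂⁻¹ →
      actPsi ω s₂ γ₂ s₃ γ₃ * (actPsi ω (s₁ * s₂) γ₂ s₃ γ₃)⁻¹ *
        actPsi ω s₁ γ₁ (s₂ * s₃) γ₃ * (actPsi ω s₁ γ₁ s₂ γ₂)⁻¹ = 1) ∧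
    (∀ s₁ γ₁ s₂ γ₂ : Γ, γ₁ = s₂ * γ₂ * s₂⁻¹ → s₁ = 1 ∨ s₂ = 1 →
      actPsi ω s₁ γ₁ s₂ γ₂ = 1) := by
  obtain ⟨cocycle, normalized⟩ := actPsi_is_groupoid_two_cocycle_general ω hcoc hnorm
  refine ⟨?_, fun s₁ γ₁ s₂ γ₂ _ ↦ normalized (s₁ * γ₁ * s₁⁻¹) s₁ γ₁ s₂ γ₂⟩
  rintro s₁ s₂ s₃ γ₃ γ₂ γ₁ rfl rfl
  have h₃ := SemiconjBy.conj_mk s₃ γ₃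
  have h₂ := SemiconjBy.conj_mk s₂ (s₃ * γ₃ * s₃⁻¹)
  have h₁ := SemiconjBy.conj_mk s₁ (s₂ * (s₃ * γ₃ * s₃⁻¹) * s₂⁻¹)
  simpa only [actPsi_eq_loopTransgression ω h₂, actPsi_eq_loopTransgression ω h₁,
    actPsi_eq_loopTransgression ω (h₁.mul_left h₂)] using cocycle _ _ _ _ _ _ _ h₃ h₂ h₁
end

section
/- Let n ≥ 1 and 0 ≤ k < n be integers. The map ω^k : (ℤ/nℤ)³ → 𝕋 defined by ω^k(a,b,c) = exp(2π√−1 · k · c(a,b) · r(c) / n), where c(a,b) = ⌊(r(a)+r(b))/n⌋ is the carry function, is a normalized 𝕋-valued 3-cocycle on the group ℤ/nℤ: for all a,b,c,d ∈ ℤ/nℤ one has ω^k(a,b,c)·ω^k(a,b+c,d)·ω^k(b,c,d) = ω^k(a+b,c,d)·ω^k(a,b,c+d), and ω^k(a,b,c) = 1 whenever one of a, b, c is 0. -/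
/-- The 3-cochain `ω^k` on `ℤ/nℤ`:
`ω^k(a,b,c) = exp(2π√−1 · k · ⌊(r(a)+r(b))/n⌋ · r(c) / n)`. -/
noncomputable def omegaK (n k : ℕ) (a b c : ZMod n) : Circle :=
  Circle.exp (2 * Real.pi * (k : ℝ) * (((a.val + b.val) / n : ℕ) : ℝ) * (c.val : ℝ) / (n : ℝ))

/-!
The carry satisfies `r(a) + r(b) = r(a + b) + n * c(a, b)`, so it measures the failure of `r` to be
additive and is therefore a `2`-cocycle on `ℤ/nℤ` with values in `ℤ`. Since
`ω^k(a, b, c) = χ(c) ^ c(a, b)` for the character `χ(c) = exp(2π√-1 k r(c) / n)`, the cochain `ω^k`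
is the cup product of this `2`-cocycle with the `1`-cocycle `χ`, hence a `3`-cocycle.
-/

section Cup

variable {G M : Type*} [AddMonoid G] [CommMonoid M]

/-- The cup product of a `2`-cochain `f : G → G → ℕ` with a character `χ` of `G`, a `3`-cochain with
values in `M`. The coefficient pairing is `(m, x) ↦ x ^ m`; restricting to `ℕ` instead of `ℤ` lets
`M` be a monoid. -/
def cupAddChar (f : G → G → ℕ) (χ : AddChar G M) (a b c : G) : M :=
  χ c ^ f a b

theorem cupAddChar_cocycle {f : G → G → ℕ}
    (hf : ∀ a b c, f a b + f (a + b) c = f b c + f a (b + c)) (χ : AddChar G M) (a b c d : G) :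
    cupAddChar f χ a b c * cupAddChar f χ a (b + c) d * cupAddChar f χ b c d =
      cupAddChar f χ (a + b) c d * cupAddChar f χ a b (c + d) := by
  unfold cupAddChar
  calc χ c ^ f a b * χ d ^ f a (b + c) * χ d ^ f b c
      = χ c ^ f a b * χ d ^ (f b c + f a (b + c)) := by rw [mul_assoc, ← pow_add, add_comm]
    _ = χ c ^ f a b * χ d ^ (f a b + f (a + b) c) := by rw [hf]
    _ = χ d ^ f (a + b) c * (χ c * χ d) ^ f a b := by
      rw [pow_add, mul_pow, ← mul_assoc, mul_comm]
    _ = χ d ^ f (a + b) c * χ (c + d) ^ f a b := by rw [AddChar.map_add_eq_mul]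

end Cup

section Carry

variable {n : ℕ}

/-- The carry `⌊(r(a) + r(b)) / n⌋` in the addition of the canonical representatives of `a` and `b`,
encoded by division in `ℕ`. -/
def carry (a b : ZMod n) : ℕ :=
  (a.val + b.val) / n

variable [NeZero n]

theorem val_add_add_mul_carry (a b : ZMod n) :
    (a + b).val + n * carry a b = a.val + b.val := by
  rw [ZMod.val_add, carry, Nat.mod_add_div]

theorem carry_cocycle (a b c : ZMod n) :
    carry a b + carry (a + b) c = carry b c + carry a (b + c) := by
  have hab := val_add_add_mul_carry a b
  have habc := val_add_add_mul_carry (a + b) c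
  have hbc := val_add_add_mul_carry b c
  have habc' := val_add_add_mul_carry a (b + c)
  rw [← add_assoc] at habc'
  apply Nat.eq_of_mul_eq_mul_left (NeZero.pos n)
  linarith

@[simp]
theorem carry_zero_left (b : ZMod n) : carry 0 b = 0 := by
  simp [carry, Nat.div_eq_of_lt b.val_lt]

@[simp]
theorem carry_zero_right (a : ZMod n) : carry a 0 = 0 := by
  simp [carry, Nat.div_eq_of_lt a.val_lt]

theorem omegaK_eq_cupAddChar (k : ℕ) :
    omegaK n k = cupAddChar carry (ZMod.toCircle ^ k) := by
  ext a b c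
  simp only [omegaK, cupAddChar, carry, AddChar.pow_apply, Circle.coe_exp, Circle.coe_pow,
    ZMod.toCircle_apply, ← Complex.exp_nat_mul]
  congr 1
  push_cast
  ring

theorem omegaK_is_normalized_three_cocycle_general {M : Type*} [CommMonoid M]
    (χ : AddChar (ZMod n) M) :
    (∀ a b c d : ZMod n,
      cupAddChar carry χ a b c * cupAddChar carry χ a (b + c) d * cupAddChar carry χ b c d =
        cupAddChar carry χ (a + b) c d * cupAddChar carry χ a b (c + d)) ∧
    (∀ a b c : ZMod n, a = 0 ∨ b = 0 ∨ c = 0 → cupAddChar carry χ a b c = 1) := by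
  refine ⟨cupAddChar_cocycle carry_cocycle χ, ?_⟩
  rintro a b c (rfl | rfl | rfl) <;> simp [cupAddChar]

end Carry

/-- For `n ≥ 1` and `0 ≤ k < n`, `ω^k` is a normalized 𝕋-valued 3-cocycle on `ℤ/nℤ`. -/
theorem omegaK_is_normalized_three_cocycle (n k : ℕ) (hn : 1 ≤ n) (hk : k < n) :
    (∀ a b c d : ZMod n,
      omegaK n k a b c * omegaK n k a (b + c) d * omegaK n k b c d =
        omegaK n k (a + b) c d * omegaK n k a b (c + d)) ∧
    (∀ a b c : ZMod n, a = 0 ∨ b = 0 ∨ c = 0 → omegaK n k a b c = 1) := by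
  have : NeZero n := .of_pos hn
  simpa only [omegaK_eq_cupAddChar] using
    omegaK_is_normalized_three_cocycle_general (ZMod.toCircle ^ k)
end

section
/- Let n ≥ 1 and 0 ≤ k < n be integers, and let ω^k(a,b,c) = exp(2π√−1 · k · c(a,b) · r(c)/n) on ℤ/nℤ. For a, s ∈ ℤ/nℤ put ζ(s,a) = exp(−2π√−1 · k · r(s)·r(a)/n²). Then for all a, s, t ∈ ℤ/nℤ one has ω^k(a,s,t) · ζ(s,a) · ω^k(s,a,t)⁻¹ · ζ(t,a) · ω^k(s,t,a) = ζ(s+t,a). (This is the identity verifying that the rescaled family c̃_Y = ζ(s,a)·c_Y defines a half braiding for the ω^k-twisted category.) -/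
/-- `ζ(s,a) = exp(−2π√−1 · k · r(s)·r(a)/n²)`. -/
noncomputable def zetaK (n k : ℕ) (s a : ZMod n) : Circle :=
  Circle.exp (-(2 * Real.pi * (k : ℝ) * (s.val : ℝ) * (a.val : ℝ)) / ((n : ℝ) ^ 2))

/-! The carry is symmetric, so the first and third factors cancel. What is left is the carry
relation `r(s+t) + n·c(s,t) = r(s) + r(t)` multiplied by `−2π·k·r(a)/n²` and exponentiated: the
phases agree as real numbers, not only modulo `2π`. -/

theorem zmod_val_add_add_mul_carry {n : ℕ} [NeZero n] (s t : ZMod n) :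
    (s + t).val + n * ((s.val + t.val) / n) = s.val + t.val := by
  rw [ZMod.val_add, Nat.mod_add_div]

theorem omegaK_left_comm (n k : ℕ) (a b c : ZMod n) : omegaK n k a b c = omegaK n k b a c := by
  rw [omegaK, omegaK, add_comm a.val]

theorem zetaK_add_left (n k : ℕ) [NeZero n] (s t a : ZMod n) :
    zetaK n k (s + t) a = zetaK n k s a * zetaK n k t a * omegaK n k s t a := by
  have hn : (n : ℝ) ≠ 0 := NeZero.ne _
  have carry : ((s + t).val : ℝ) = s.val + t.val - n * ((s.val + t.val) / n : ℕ) :=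
    eq_sub_of_add_eq (mod_cast zmod_val_add_add_mul_carry s t)
  rw [zetaK, zetaK, zetaK, omegaK, ← Circle.exp_add, ← Circle.exp_add, carry]
  congr 1
  field_simp
  ring

theorem zetaK_half_braiding_identity_general (n k : ℕ) [NeZero n] (a s t : ZMod n) :
    omegaK n k a s t * zetaK n k s a * (omegaK n k s a t)⁻¹ * zetaK n k t a *
      omegaK n k s t a = zetaK n k (s + t) a := by
  rw [omegaK_left_comm n k a s t, mul_inv_cancel_comm, zetaK_add_left]

/-- For `n ≥ 1`, `0 ≤ k < n`:
`ω^k(a,s,t) · ζ(s,a) · ω^k(s,a,t)⁻¹ · ζ(t,a) · ω^k(s,t,a) = ζ(s+t,a)`,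
the identity verifying that `c̃_Y = ζ(s,a)·c_Y` defines a half braiding for the twisted
category. -/
theorem zetaK_half_braiding_identity (n k : ℕ) (hn : 1 ≤ n) (hk : k < n) :
    ∀ a s t : ZMod n,
      omegaK n k a s t * zetaK n k s a * (omegaK n k s a t)⁻¹ * zetaK n k t a *
        omegaK n k s t a = zetaK n k (s + t) a := by
  have : NeZero n := ⟨Nat.one_le_iff_ne_zero.mp hn⟩
  exact zetaK_half_braiding_identity_general n k
end

section
/- Let n₁, n₂, n₃ ≥ 1 be integers, d = gcd(n₁, n₂, n₃), and Γ = (ℤ/n₁ℤ) × (ℤ/n₂ℤ) × (ℤ/n₃ℤ). The map φ₁₂₃(a,b,c) = exp(2π√−1 · r(a₁)·r(b₂)·r(c₃)/d) is a normalized 𝕋-valued 3-cocycle on Γ: for all a,b,c,x ∈ Γ one has φ₁₂₃(a,b,c)·φ₁₂₃(a,b+c,x)·φ₁₂₃(b,c,x) = φ₁₂₃(a+b,c,x)·φ₁₂₃(a,b,c+x), and φ₁₂₃(a,b,c) = 1 whenever one of a, b, c is 0. -/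
/-- The 3-cochain `φ₁₂₃` on `(ℤ/n₁ℤ) × (ℤ/n₂ℤ) × (ℤ/n₃ℤ)`:
`φ₁₂₃(a,b,c) = exp(2π√−1 · r(a₁)·r(b₂)·r(c₃)/gcd(n₁,n₂,n₃))`. -/
noncomputable def phi123 (n₁ n₂ n₃ : ℕ) (a b c : ZMod n₁ × ZMod n₂ × ZMod n₃) : Circle :=
  Circle.exp
    (2 * Real.pi * (a.1.val : ℝ) * (b.2.1.val : ℝ) * (c.2.2.val : ℝ) /
      ((Nat.gcd n₁ (Nat.gcd n₂ n₃) : ℕ) : ℝ))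

/-!
Since `d = gcd(n₁, n₂, n₃)` divides each `nᵢ`, reduction `ℤ/nᵢℤ → ℤ/dℤ` is a ring homomorphism, and
`φ₁₂₃` is the standard character of `ℤ/dℤ` applied to the product of the reductions of `a₁`, `b₂`
and `c₃`. It is therefore multiplicative in each of its three arguments, and expanding the sums
turns both sides of the cocycle identity into the same product of four values.
-/

/-- A normalized 3-cocycle of an additively written `G` with values in a multiplicatively written
`M`, on which `G` acts trivially. Both sides of the cocycle identity carry only positive powers, so
that no inverses in `M` are needed. -/
structure IsNormalizedThreeCocycle {G M : Type*} [AddZeroClass G] [MulOneClass M]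
    (φ : G → G → G → M) : Prop where
  cocycle : ∀ a b c x, φ a b c * φ a (b + c) x * φ b c x = φ (a + b) c x * φ a b (c + x)
  eq_one : ∀ a b c, a = 0 ∨ b = 0 ∨ c = 0 → φ a b c = 1

theorem isNormalizedThreeCocycle_addChar_trilinear {G A₁ A₂ A₃ A M : Type*} [AddZeroClass G]
    [AddZeroClass A₁] [AddZeroClass A₂] [AddZeroClass A₃] [AddCommMonoid A] [CommMonoid M]
    (χ : AddChar A M) (T : A₁ →+ A₂ →+ A₃ →+ A) (f : G →+ A₁) (g : G →+ A₂) (h : G →+ A₃) :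
    IsNormalizedThreeCocycle fun a b c => χ (T (f a) (g b) (h c)) where
  cocycle a b c x := by
    simp only [map_add, AddMonoidHom.add_apply, AddChar.map_add_eq_mul]
    rw [← mul_assoc, mul_assoc, mul_comm]
  eq_one := by
    rintro a b c (rfl | rfl | rfl) <;>
      simp only [map_zero, AddMonoidHom.zero_apply, AddChar.map_zero_eq_one]

theorem circleExp_two_pi_mul_natCast_div (d k : ℕ) [NeZero d] :
    Circle.exp (2 * Real.pi * k / d) = ZMod.toCircle (k : ZMod d) := by
  ext
  rw [ZMod.toCircle_natCast, Circle.coe_exp]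
  push_cast
  ring_nf

instance neZero_gcd_left (m n : ℕ) [NeZero m] : NeZero (m.gcd n) :=
  ⟨Nat.gcd_ne_zero_left (NeZero.ne m)⟩

section phi123

variable (n₁ n₂ n₃ : ℕ) [NeZero n₁] [NeZero n₂] [NeZero n₃]

theorem phi123_eq_toCircle (a b c : ZMod n₁ × ZMod n₂ × ZMod n₃) :
    phi123 n₁ n₂ n₃ a b c =
      ZMod.toCircle (a.1.cast * b.2.1.cast * c.2.2.cast : ZMod (n₁.gcd (n₂.gcd n₃))) := by
  simp only [← ZMod.natCast_val, ← Nat.cast_mul, ← circleExp_two_pi_mul_natCast_div]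
  simp only [phi123, Nat.cast_mul, mul_assoc]

theorem isNormalizedThreeCocycle_phi123 : IsNormalizedThreeCocycle (phi123 n₁ n₂ n₃) := by
  let d := n₁.gcd (n₂.gcd n₃)
  have hd₁ : d ∣ n₁ := Nat.gcd_dvd_left _ _
  have hd₂ : d ∣ n₂ := (Nat.gcd_dvd_right _ _).trans (Nat.gcd_dvd_left _ _)
  have hd₃ : d ∣ n₃ := (Nat.gcd_dvd_right _ _).trans (Nat.gcd_dvd_right _ _)
  let tripleMul : ZMod d →+ ZMod d →+ ZMod d →+ ZMod d :=
    AddMonoidHom.mul.compr₂ AddMonoidHom.mul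
  let reduce₁ : ZMod n₁ × ZMod n₂ × ZMod n₃ →+ ZMod d :=
    (ZMod.castHom hd₁ (ZMod d)).toAddMonoidHom.comp (AddMonoidHom.fst _ _)
  let reduce₂ : ZMod n₁ × ZMod n₂ × ZMod n₃ →+ ZMod d :=
    (ZMod.castHom hd₂ (ZMod d)).toAddMonoidHom.comp
      ((AddMonoidHom.fst _ _).comp (AddMonoidHom.snd _ _))
  let reduce₃ : ZMod n₁ × ZMod n₂ × ZMod n₃ →+ ZMod d :=
    (ZMod.castHom hd₃ (ZMod d)).toAddMonoidHom.comp
      ((AddMonoidHom.snd _ _).comp (AddMonoidHom.snd _ _))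
  have phi123_eq : phi123 n₁ n₂ n₃ =
      fun a b c => ZMod.toCircle (tripleMul (reduce₁ a) (reduce₂ b) (reduce₃ c)) := by
    funext a b c
    exact phi123_eq_toCircle n₁ n₂ n₃ a b c
  rw [phi123_eq]
  exact isNormalizedThreeCocycle_addChar_trilinear ZMod.toCircle tripleMul reduce₁ reduce₂ reduce₃

end phi123

/-- For `n₁, n₂, n₃ ≥ 1`, `φ₁₂₃` is a normalized 𝕋-valued 3-cocycle on
`(ℤ/n₁ℤ) × (ℤ/n₂ℤ) × (ℤ/n₃ℤ)`. -/
theorem phi123_is_normalized_three_cocycle (n₁ n₂ n₃ : ℕ)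
    (hn₁ : 1 ≤ n₁) (hn₂ : 1 ≤ n₂) (hn₃ : 1 ≤ n₃) :
    (∀ a b c x : ZMod n₁ × ZMod n₂ × ZMod n₃,
      phi123 n₁ n₂ n₃ a b c * phi123 n₁ n₂ n₃ a (b + c) x * phi123 n₁ n₂ n₃ b c x =
        phi123 n₁ n₂ n₃ (a + b) c x * phi123 n₁ n₂ n₃ a b (c + x)) ∧
    (∀ a b c : ZMod n₁ × ZMod n₂ × ZMod n₃, a = 0 ∨ b = 0 ∨ c = 0 →
      phi123 n₁ n₂ n₃ a b c = 1) := by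
  have : NeZero n₁ := .of_pos hn₁
  have : NeZero n₂ := .of_pos hn₂
  have : NeZero n₃ := .of_pos hn₃
  have phi123_cocycle := isNormalizedThreeCocycle_phi123 n₁ n₂ n₃
  exact ⟨phi123_cocycle.cocycle, phi123_cocycle.eq_one⟩
end

section
/- Let Γ = (ℤ/2ℤ)³, let ω = φ₁₂₃ be the normalized 3-cocycle ω(a,b,c) = (−1)^{r(a₁)·r(b₂)·r(c₃)}, and let a = (0,0,1) ∈ Γ. Then the associated 2-cocycle φ_a(s,t) = ω(a,s,t)·ω(s,a,t)⁻¹·ω(s,t,a) is given by φ_a(s,t) = (−1)^{r(s₁)·r(t₂)}, it is a normalized 𝕋-valued 2-cocycle on Γ, and it is not a coboundary: there is no function ξ : Γ → 𝕋 such that φ_a(s,t) = ξ(t)·ξ(s+t)⁻¹·ξ(s) for all s, t ∈ Γ (indeed φ_a((1,0,0),(0,1,0)) = −1 ≠ 1 = φ_a((0,1,0),(1,0,0)), while every coboundary on a commutative group is symmetric). -/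
/-- `−1` as an element of the circle group 𝕋. -/
noncomputable def circleNegOne : Circle :=
  ⟨-1, by simp [Submonoid.unitSphere, mem_sphere_zero_iff_norm]⟩

/-- The 3-cocycle `ω = φ₁₂₃` on `(ℤ/2ℤ)³`: `ω(a,b,c) = (−1)^{r(a₁)·r(b₂)·r(c₃)}`. -/
noncomputable def omega123 (a b c : ZMod 2 × ZMod 2 × ZMod 2) : Circle :=
  circleNegOne ^ (a.1.val * b.2.1.val * c.2.2.val)

/-- The associated 2-cocycle `φ_a(s,t) = ω(a,s,t)·ω(s,a,t)⁻¹·ω(s,t,a)` for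
`a = (0,0,1)`. -/
noncomputable def phiA123 (s t : ZMod 2 × ZMod 2 × ZMod 2) : Circle :=
  omega123 (0, 0, 1) s t * (omega123 s (0, 0, 1) t)⁻¹ * omega123 s t (0, 0, 1)

/-!
Since `a = (0,0,1)` has vanishing first and second coordinates, only the factor `ω(s,t,a)` of
`φ_a(s,t)` can differ from `1`, so `φ_a` is the pullback of the bicharacter `(x, y) ↦ (-1)^(xy)`
of `ℤ/2ℤ` along the first two coordinates. Bimultiplicativity gives both the cocycle identity and
the normalization. Coboundaries on a commutative group are symmetric, whereas `φ_a`, which reads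
different coordinates of its two arguments, is not.
-/

section Cocycle

variable {G M : Type*}

/-- The 2-cocycle identity for the trivial action, with `G` written additively and the
coefficients `M` multiplicatively (so Mathlib's `groupCohomology.IsMulCocycle₂` does not apply
directly). -/
def IsTwoCocycle [Add G] [CommGroup M] (σ : G → G → M) : Prop :=
  ∀ s t u, σ t u * (σ (s + t) u)⁻¹ * σ s (t + u) * (σ s t)⁻¹ = 1

/-- Normalization of a 2-cochain: the value is `1` as soon as one of the arguments is `0`. -/
def IsNormalizedTwoCochain [Zero G] [One M] (σ : G → G → M) : Prop :=
  ∀ s t, s = 0 ∨ t = 0 → σ s t = 1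

/-- The 2-coboundaries `∂ξ` of 1-cochains `ξ : G → M`, in the same mixed notation as
`IsTwoCocycle`. -/
def IsTwoCoboundary [Add G] [CommGroup M] (σ : G → G → M) : Prop :=
  ∃ ξ : G → M, ∀ s t, σ s t = ξ t * (ξ (s + t))⁻¹ * ξ s

theorem IsTwoCoboundary.symmetric [AddCommMagma G] [CommGroup M] {σ : G → G → M}
    (hσ : IsTwoCoboundary σ) (s t : G) : σ s t = σ t s := by
  obtain ⟨ξ, hξ⟩ := hσ
  rw [hξ, hξ, add_comm, mul_right_comm, mul_comm (ξ t), mul_right_comm]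

end Cocycle

section Bicharacter

variable {A B G M : Type*} [AddMonoid A] [AddMonoid B] [AddZeroClass G]

theorem isTwoCocycle_bicharacter [CommGroup M] (β : AddChar A (AddChar B M)) (f : G →+ A)
    (g : G →+ B) : IsTwoCocycle fun s t ↦ β (f s) (g t) := by
  intro s t u
  simp only [map_add, AddChar.map_add_eq_mul, AddChar.mul_apply]
  rw [mul_inv_eq_one, mul_inv, mul_inv_cancel_comm_assoc, inv_mul_cancel_comm_assoc]

theorem isNormalizedTwoCochain_bicharacter [CommMonoid M] (β : AddChar A (AddChar B M))
    (f : G →+ A) (g : G →+ B) : IsNormalizedTwoCochain fun s t ↦ β (f s) (g t) := by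
  rintro s t (rfl | rfl) <;> simp

end Bicharacter

section ZMod

variable {M : Type*} [CommMonoid M] {n : ℕ} [NeZero n] {ζ : M}

theorem zmodChar_pow_eq_one (hζ : ζ ^ n = 1) : AddChar.zmodChar n hζ ^ n = 1 := by
  ext x
  rw [AddChar.pow_apply, AddChar.zmodChar_apply, pow_right_comm, hζ, one_pow, AddChar.one_apply]

/-- The bicharacter `(x, y) ↦ ζ ^ (r(x) r(y))` of `ℤ/nℤ` attached to an `n`-th root of unity `ζ`,
as the character of `ℤ/nℤ` with values in its own character group sending `1` to `y ↦ ζ ^ r(y)`. -/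
noncomputable def zmodBicharacter (hζ : ζ ^ n = 1) : AddChar (ZMod n) (AddChar (ZMod n) M) :=
  AddChar.zmodChar n (zmodChar_pow_eq_one hζ)

theorem zmodBicharacter_apply (hζ : ζ ^ n = 1) (x y : ZMod n) :
    zmodBicharacter hζ x y = ζ ^ (x.val * y.val) := by
  rw [zmodBicharacter, AddChar.zmodChar_apply, AddChar.pow_apply, AddChar.zmodChar_apply,
    pow_mul']

end ZMod

theorem coe_circleNegOne : (circleNegOne : ℂ) = -1 := rfl

theorem circleNegOne_sq : circleNegOne ^ 2 = 1 := by
  ext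
  rw [Circle.coe_pow, coe_circleNegOne, neg_one_sq, Circle.coe_one]

theorem circleNegOne_ne_one : circleNegOne ≠ 1 := by
  rw [Ne, Circle.ext_iff, coe_circleNegOne, Circle.coe_one]
  norm_num

theorem phiA123_apply (s t : ZMod 2 × ZMod 2 × ZMod 2) :
    phiA123 s t = circleNegOne ^ (s.1.val * t.2.1.val) := by
  simp [phiA123, omega123, ZMod.val_one]

theorem phiA123_eq_zmodBicharacter :
    phiA123 = fun s t ↦ zmodBicharacter circleNegOne_sq
      (AddMonoidHom.fst (ZMod 2) (ZMod 2 × ZMod 2) s)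
      (((AddMonoidHom.fst (ZMod 2) (ZMod 2)).comp (AddMonoidHom.snd _ _)) t) := by
  funext s t
  exact (phiA123_apply s t).trans (zmodBicharacter_apply _ _ _).symm

theorem isTwoCocycle_phiA123 : IsTwoCocycle phiA123 := by
  rw [phiA123_eq_zmodBicharacter]
  exact isTwoCocycle_bicharacter _ _ _

theorem isNormalizedTwoCochain_phiA123 : IsNormalizedTwoCochain phiA123 := by
  rw [phiA123_eq_zmodBicharacter]
  exact isNormalizedTwoCochain_bicharacter _ _ _

theorem not_isTwoCoboundary_phiA123 : ¬ IsTwoCoboundary phiA123 := by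
  intro h
  have h₁₂ : phiA123 (1, 0, 0) (0, 1, 0) = circleNegOne := by simp [phiA123_apply, ZMod.val_one]
  have h₂₁ : phiA123 (0, 1, 0) (1, 0, 0) = 1 := by simp [phiA123_apply]
  exact circleNegOne_ne_one <| h₁₂.symm.trans <| (h.symmetric _ _).trans h₂₁

/-- For `Γ = (ℤ/2ℤ)³`, `ω = φ₁₂₃` and `a = (0,0,1)`: the associated 2-cocycle `φ_a` is
given by `φ_a(s,t) = (−1)^{r(s₁)·r(t₂)}`, it is a normalized 𝕋-valued 2-cocycle on `Γ`,
and it is not a coboundary. -/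
theorem phiA123_formula_cocycle_not_coboundary :
    (∀ s t : ZMod 2 × ZMod 2 × ZMod 2,
      phiA123 s t = circleNegOne ^ (s.1.val * t.2.1.val)) ∧
    (∀ s t u : ZMod 2 × ZMod 2 × ZMod 2,
      phiA123 t u * (phiA123 (s + t) u)⁻¹ * phiA123 s (t + u) * (phiA123 s t)⁻¹ = 1) ∧
    (∀ s t : ZMod 2 × ZMod 2 × ZMod 2, s = 0 ∨ t = 0 → phiA123 s t = 1) ∧
    ¬ ∃ ξ : ZMod 2 × ZMod 2 × ZMod 2 → Circle,
        ∀ s t : ZMod 2 × ZMod 2 × ZMod 2,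
          phiA123 s t = ξ t * (ξ (s + t))⁻¹ * ξ s :=
  ⟨phiA123_apply, isTwoCocycle_phiA123, isNormalizedTwoCochain_phiA123,
    not_isTwoCoboundary_phiA123⟩
end
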